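/- arXiv:1506.06253 — 2 statements merged into one kernel-verified Lean document; each statement's English description precedes it below -/
import Mathlib

section
/- Assume P does not lie on a median of ABC (a line joining a vertex to the midpoint of the opposite side). Then η(O) = O′ and η(H) = H′; consequently the lines OO′ and HH′ are parallel to the line PP′. -/
noncomputable section

/-- The real affine plane. -/
abbrev Pt : Type := ℝ × ℝ

/-- `u` and `v` are parallel vectors (the zero vector is parallel to everything). -/
def Par (u v : Pt) : Prop := ∃ t : ℝ, u = t • v ∨ v = t • u

/-- The centroid of the triangle `ABC`. -/
def cent (A B C : Pt) : Pt := (3⁻¹ : ℝ) • (A + B + C)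

/-- The homothety with center `Z` and ratio `r`. -/
def homoth (Z : Pt) (r : ℝ) (X : Pt) : Pt := Z + r • (X - Z)

/-- The value at `p` of the quadratic polynomial with coefficient vector `c`. -/
def qval (c : Fin 6 → ℝ) (p : Pt) : ℝ :=
  c 0 * p.1 ^ 2 + c 1 * p.1 * p.2 + c 2 * p.2 ^ 2 + c 3 * p.1 + c 4 * p.2 + c 5

/-- `S` is a conic: the zero locus of a real polynomial of total degree 2. -/
def IsConic (S : Set Pt) : Prop :=
  ∃ c : Fin 6 → ℝ, ¬(c 0 = 0 ∧ c 1 = 0 ∧ c 2 = 0) ∧ S = {p | qval c p = 0}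

/-- `Z` is a center of symmetry of `S`. -/
def IsCenterOf (Z : Pt) (S : Set Pt) : Prop :=
  ∀ p ∈ S, (2 : ℝ) • Z - p ∈ S

/-- The gradient at `p` of the quadratic polynomial with coefficients `c`. -/
def qgrad (c : Fin 6 → ℝ) (p : Pt) : Pt :=
  (2 * c 0 * p.1 + c 1 * p.2 + c 3, c 1 * p.1 + 2 * c 2 * p.2 + c 4)

/-- The line through `X` and `Y`. -/
def lineThru (X Y : Pt) : Set Pt := {p | ∃ t : ℝ, p = X + t • (Y - X)}

/-- `L` is the tangent line at the nonsingular point `p` of the conic with coefficients `c`. -/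
def IsTangentLineAt (c : Fin 6 → ℝ) (L : Set Pt) (p : Pt) : Prop :=
  qval c p = 0 ∧ qgrad c p ≠ 0 ∧
  L = {q | (qgrad c p).1 * (q.1 - p.1) + (qgrad c p).2 * (q.2 - p.2) = 0}

/-!
Let `P = (x : y : z)` with `x + y + z = 1` and put `s = xy + yz + zx`. The vector `QD` is a multiple
of `(-x(y + z)² : y(s - z²) : z(s - y²))`, so intersecting the parallels to `QD` and `QE` through
`A` and `B` gives
`H = ((1 - ρ)/4) (A + B + C) + (ρ/2) P + ((ρ + 1)/4) P'`, where `ρ = 1/x + 1/y + 1/z`.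
Isotomic conjugation preserves `ρ`, so `H'` is the same combination with `P` and `P'` exchanged, and
an affine map that fixes `G` and exchanges `P` and `P'` takes `H` to `H'`. It commutes with the
complement map, which takes `H` to `O` and `H'` to `O'`. The same formula gives
`H' - H = ((ρ - 1)/4) (P' - P)`.
-/

section GeneralPosition

variable {k V : Type*} [Field k] [AddCommGroup V] [Module k V]
variable {A B C G P P' D E H H' O O' : V} {x y z : k}

/-- Proportionality of vectors: `Par` over an arbitrary field, with the zero vector again
proportional to everything. -/
def Proportional (k : Type*) [Field k] {V : Type*} [AddCommGroup V] [Module k V] (u v : V) : Prop :=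
  ∃ t : k, u = t • v ∨ v = t • u

theorem Proportional.exists_eq_smul {u v : V} (h : Proportional k u v) (hv : v ≠ 0) :
    ∃ t : k, u = t • v := by
  obtain ⟨t, rfl | rfl⟩ := h
  · exact ⟨t, rfl⟩
  · exact ⟨t⁻¹, (inv_smul_smul₀ (left_ne_zero_of_smul hv) u).symm⟩

theorem Proportional.smul_left {u v : V} (h : Proportional k u v) {r : k} (hr : r ≠ 0) :
    Proportional k (r • u) v := by
  obtain ⟨t, rfl | rfl⟩ := h
  · exact ⟨r * t, .inl (smul_smul r t v)⟩
  · exact ⟨t / r, .inr (by rw [smul_smul, div_mul_cancel₀ t hr])⟩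

theorem barycentric_weights_unique (hABC : AffineIndependent k ![A, B, C]) {a b c a' b' c' : k}
    (hw : a + b + c = a' + b' + c')
    (h : a • A + b • B + c • C = a' • A + b' • B + c' • C) : a = a' ∧ b = b' ∧ c = c' := by
  have heq := hABC.eq_of_sum_eq_sum (s := .univ) (w₁ := ![a, b, c]) (w₂ := ![a', b', c'])
    (by simpa [Fin.sum_univ_three] using hw) (by simpa [Fin.sum_univ_three] using h)
  exact ⟨heq 0 (by simp), heq 1 (by simp), heq 2 (by simp)⟩

theorem affineMap_smul_add_smul_add_smul (f : V →ᵃ[k] V) {a b c : k} (h : a + b + c = 1)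
    (X Y Z : V) : f (a • X + b • Y + c • Z) = a • f X + b • f Y + c • f Z := by
  obtain rfl : a = 1 - b - c := by linear_combination h
  rw [f.decomp]
  simp only [Pi.add_apply, map_add, map_smul]
  module

/-- `D` is the trace on `BC` of the cevian `AP`. -/
def IsTrace (k : Type*) [Field k] {V : Type*} [AddCommGroup V] [Module k V] (A B C P D : V) :
    Prop :=
  Collinear k {A, P, D} ∧ Collinear k {B, C, D}

theorem IsTrace.smul_eq (hABC : AffineIndependent k ![A, B, C]) (hsum : x + y + z = 1)
    (hx : x ≠ 1) (hD : IsTrace k A B C (x • A + y • B + z • C) D) :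
    (y + z) • D = y • B + z • C := by
  have hBC : B ≠ C := hABC.injective.ne (show (1 : Fin 3) ≠ 2 by decide)
  have hAP : A ≠ x • A + y • B + z • C := fun h ↦ hx <| Eq.symm <|
    (barycentric_weights_unique hABC (a := 1) (b := 0) (c := 0) (b' := y) (c' := z)
      (by simp [hsum]) (by simpa using h)).1
  obtain ⟨r, hr⟩ := mem_affineSpan_pair_iff_exists_lineMap_eq.1 <|
    hD.1.mem_affineSpan_of_mem_of_ne (p₃ := D) (by simp) (by simp) (by simp) hAP
  obtain ⟨t, ht⟩ := mem_affineSpan_pair_iff_exists_lineMap_eq.1 <|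
    hD.2.mem_affineSpan_of_mem_of_ne (p₃ := D) (by simp) (by simp) (by simp) hBC
  rw [AffineMap.lineMap_apply_module] at hr ht
  have hA : 1 - r + r * x = 0 := And.left <|
    barycentric_weights_unique hABC (b := r * y) (c := r * z) (b' := 1 - t) (c' := t)
      (by linear_combination r * hsum) <| by
    rw [zero_smul, zero_add, ht, ← hr]
    module
  have hyz : y + z = 1 - x := by linear_combination hsum
  have hr1 : (1 - x) * r = 1 := by linear_combination -hA
  rw [← hr, hyz]
  match_scalars
  · linear_combination (x - 1) * hr1
  · linear_combination y * hr1
  · linear_combination z * hr1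

theorem four_ne_zero_of_invertible_two [Invertible (2 : k)] : (4 : k) ≠ 0 := by
  convert mul_ne_zero (Invertible.ne_zero (2 : k)) (Invertible.ne_zero (2 : k))
  norm_num

/-- The complement map `K`. The ratio `-1/2` cancels the `1/3` in the centroid, so that only `2` has
to be invertible. -/
def complementMap (k : Type*) [Field k] [Invertible (2 : k)] {V : Type*} [AddCommGroup V]
    [Module k V] (A B C X : V) : V :=
  (⅟2 : k) • (A + B + C - X)

/-- The left-hand side of the barycentric equation of the Steiner circumellipse. -/
def steinerForm (x y z : k) : k := x * y + y * z + z * x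

/-- The isotomic conjugate of `(x : y : z)`, in normalized barycentric coordinates. -/
def isotomicPoint (A B C : V) (x y z : k) : V :=
  (y * z / steinerForm x y z) • A + (x * z / steinerForm x y z) • B +
    (x * y / steinerForm x y z) • C

/-- `(x, y, z)` are the normalized barycentric coordinates of a point that lies neither on a side of
the triangle, nor on a side of its anticomplementary triangle, nor on its Steiner circumellipse. -/
structure IsAdmissible (x y z : k) : Prop where
  sum_eq_one : x + y + z = 1
  x_ne_zero : x ≠ 0
  y_ne_zero : y ≠ 0
  z_ne_zero : z ≠ 0
  x_ne_one : x ≠ 1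
  y_ne_one : y ≠ 1
  z_ne_one : z ≠ 1
  steinerForm_ne_zero : steinerForm x y z ≠ 0

/-- The vector `QD` up to a scalar, where `D` is the trace on `BC` of the point `(x : y : z)` and
`Q` is its isotomcomplement. -/
def traceDirection (A B C : V) (x y z : k) : V :=
  (-(x * (y + z) ^ 2)) • A + (y * (steinerForm x y z - z ^ 2)) • B +
    (z * (steinerForm x y z - y ^ 2)) • C

theorem steinerForm_swap (x y z : k) : steinerForm y x z = steinerForm x y z := by
  simp only [steinerForm]
  ring

theorem complementMap_swap [Invertible (2 : k)] (A B C X : V) :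
    complementMap k A B C X = complementMap k B A C X := by
  rw [complementMap, complementMap, add_comm A]

theorem isotomicPoint_swap (A B C : V) (x y z : k) :
    isotomicPoint B A C y x z = isotomicPoint A B C x y z := by
  simp only [isotomicPoint, steinerForm_swap x y z, mul_comm y x]
  abel

namespace IsAdmissible

theorem swap (h : IsAdmissible x y z) : IsAdmissible y x z where
  sum_eq_one := by linear_combination h.sum_eq_one
  x_ne_zero := h.y_ne_zero
  y_ne_zero := h.x_ne_zero
  z_ne_zero := h.z_ne_zero
  x_ne_one := h.y_ne_one
  y_ne_one := h.x_ne_one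
  z_ne_one := h.z_ne_one
  steinerForm_ne_zero := steinerForm_swap x y z ▸ h.steinerForm_ne_zero

theorem y_add_z_ne_zero (h : IsAdmissible x y z) : y + z ≠ 0 := fun h0 ↦
  h.x_ne_one (by linear_combination h.sum_eq_one - h0)

end IsAdmissible

theorem div_ne_one_of_eq_add_mul_one_sub {p s : k} (hs0 : s ≠ 0) (hx0 : x ≠ 0) (hx1 : x ≠ 1)
    (hs : s = p + x * (1 - x)) : p / s ≠ 1 := by
  rw [ne_eq, div_eq_one_iff_eq hs0]
  rintro rfl
  exact mul_ne_zero hx0 (sub_ne_zero.2 hx1.symm) (by linear_combination -hs)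

theorem steinerForm_isotomic (hsum : x + y + z = 1) (hs : steinerForm x y z ≠ 0) :
    steinerForm (y * z / steinerForm x y z) (x * z / steinerForm x y z)
      (x * y / steinerForm x y z) = x * y * z / steinerForm x y z ^ 2 := by
  rw [steinerForm]
  field_simp
  linear_combination x * y * z * hsum

theorem IsAdmissible.isotomic (h : IsAdmissible x y z) :
    IsAdmissible (y * z / steinerForm x y z) (x * z / steinerForm x y z)
      (x * y / steinerForm x y z) := by
  have hs := h.steinerForm_ne_zero
  have hx := h.x_ne_zero
  have hy := h.y_ne_zero
  have hz := h.z_ne_zero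
  refine ⟨?_, by positivity, by positivity, by positivity, ?_, ?_, ?_, ?_⟩
  · field_simp
    rw [steinerForm]
    ring
  · exact div_ne_one_of_eq_add_mul_one_sub hs hx h.x_ne_one
      (by rw [steinerForm]; linear_combination x * h.sum_eq_one)
  · exact div_ne_one_of_eq_add_mul_one_sub hs hy h.y_ne_one
      (by rw [steinerForm]; linear_combination y * h.sum_eq_one)
  · exact div_ne_one_of_eq_add_mul_one_sub hs hz h.z_ne_one
      (by rw [steinerForm]; linear_combination z * h.sum_eq_one)
  · rw [steinerForm_isotomic h.sum_eq_one hs]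
    positivity

theorem isotomicPoint_isotomic (h : IsAdmissible x y z) (A B C : V) :
    isotomicPoint A B C (y * z / steinerForm x y z) (x * z / steinerForm x y z)
      (x * y / steinerForm x y z) = x • A + y • B + z • C := by
  have hs := h.steinerForm_ne_zero
  have hx := h.x_ne_zero
  have hy := h.y_ne_zero
  have hz := h.z_ne_zero
  rw [isotomicPoint, steinerForm_isotomic h.sum_eq_one hs]
  congr! 3 <;> field_simp

theorem inv_add_inv_add_inv_isotomic (h : IsAdmissible x y z) :
    (y * z / steinerForm x y z)⁻¹ + (x * z / steinerForm x y z)⁻¹ +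
      (x * y / steinerForm x y z)⁻¹ = x⁻¹ + y⁻¹ + z⁻¹ := by
  have hx := h.x_ne_zero
  have hy := h.y_ne_zero
  have hz := h.z_ne_zero
  field_simp
  rw [steinerForm]
  linear_combination (x * y + y * z + z * x) * h.sum_eq_one

theorem traceDirection_ne_zero (hABC : AffineIndependent k ![A, B, C]) (h : IsAdmissible x y z) :
    traceDirection A B C x y z ≠ 0 := by
  intro h0
  have hA := And.left <| barycentric_weights_unique hABC (a' := 0) (b' := 0) (c' := 0)
    (by simp only [steinerForm]; ring) (h0.trans (by simp))
  exact neg_ne_zero.2 (mul_ne_zero h.x_ne_zero (pow_ne_zero 2 h.y_add_z_ne_zero)) hA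

theorem smul_trace_sub_isotomcomplement [Invertible (2 : k)]
    (hABC : AffineIndependent k ![A, B, C]) (h : IsAdmissible x y z)
    (hD : IsTrace k A B C (x • A + y • B + z • C) D) :
    (2 * steinerForm x y z * (y + z)) • (D - complementMap k A B C (isotomicPoint A B C x y z)) =
      traceDirection A B C x y z := by
  have h2 : (2 : k) ≠ 0 := Invertible.ne_zero 2
  have hs := h.steinerForm_ne_zero
  calc
    _ = (2 * steinerForm x y z) • ((y + z) • D) - (2 * steinerForm x y z * (y + z)) •
          complementMap k A B C (isotomicPoint A B C x y z) := by module
    _ = _ := by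
      rw [hD.smul_eq hABC h.sum_eq_one h.x_ne_one, complementMap, isotomicPoint, traceDirection,
        invOf_eq_inv]
      match_scalars <;> field_simp <;> rw [steinerForm] <;> ring

theorem exists_eq_add_smul_traceDirection [Invertible (2 : k)]
    (hABC : AffineIndependent k ![A, B, C]) (h : IsAdmissible x y z)
    (hP : P = x • A + y • B + z • C) (hP' : P' = isotomicPoint A B C x y z)
    (hD : IsTrace k A B C P D) (hH : Proportional k (H - A) (D - complementMap k A B C P')) :
    ∃ t : k, H = A + t • traceDirection A B C x y z := by
  subst hP hP'
  have hdir := smul_trace_sub_isotomcomplement hABC h hD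
  have hne : D - complementMap k A B C (isotomicPoint A B C x y z) ≠ 0 :=
    right_ne_zero_of_smul (hdir ▸ traceDirection_ne_zero hABC h)
  have hr : 2 * steinerForm x y z * (y + z) ≠ 0 :=
    mul_ne_zero (mul_ne_zero (Invertible.ne_zero 2) h.steinerForm_ne_zero) h.y_add_z_ne_zero
  obtain ⟨t, ht⟩ := hH.exists_eq_smul hne
  refine ⟨t / (2 * steinerForm x y z * (y + z)), ?_⟩
  rw [← hdir, smul_smul, div_mul_cancel₀ t hr, ← ht, add_sub_cancel]

theorem coeff_of_add_smul_traceDirection_eq (hABC : AffineIndependent k ![A, B, C])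
    (hz : z ≠ 0) {t u : k}
    (h : A + t • traceDirection A B C x y z = B + u • traceDirection B A C y x z) :
    4 * (x * y * z) * steinerForm x y z * t = steinerForm x y z - x ^ 2 := by
  obtain ⟨hA, -, hC⟩ := barycentric_weights_unique hABC
    (a := 1 - t * (x * (y + z) ^ 2)) (b := t * (y * (steinerForm x y z - z ^ 2)))
    (c := t * (z * (steinerForm x y z - y ^ 2)))
    (a' := u * (x * (steinerForm x y z - z ^ 2))) (b' := 1 - u * (y * (x + z) ^ 2))
    (c' := u * (z * (steinerForm x y z - x ^ 2))) (by simp only [steinerForm]; ring)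
    (by
      rw [traceDirection, traceDirection, steinerForm_swap x y z] at h
      convert h using 1 <;> module)
  have hC' : t * (steinerForm x y z - y ^ 2) = u * (steinerForm x y z - x ^ 2) :=
    mul_left_cancel₀ hz (by linear_combination hC)
  have hcoeff : x * ((y + z) ^ 2 * (steinerForm x y z - x ^ 2) +
      (steinerForm x y z - y ^ 2) * (steinerForm x y z - z ^ 2)) =
      4 * (x * y * z) * steinerForm x y z := by
    rw [steinerForm]
    ring
  linear_combination -t * hcoeff - (steinerForm x y z - x ^ 2) * hA +
    x * (steinerForm x y z - z ^ 2) * hC'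

/-- The generalized orthocenter of a point `X` with isotomic conjugate `Y`, where `ρ` is the sum of
the reciprocals of the normalized barycentric coordinates of `X`. -/
def orthocenterCombination (A B C : V) (ρ : k) (X Y : V) : V :=
  ((1 - ρ) / 4) • (A + B + C) + (ρ / 2) • X + ((ρ + 1) / 4) • Y

theorem add_smul_traceDirection_eq_orthocenterCombination [Invertible (2 : k)]
    (h : IsAdmissible x y z) {t : k}
    (ht : 4 * (x * y * z) * steinerForm x y z * t = steinerForm x y z - x ^ 2) :
    A + t • traceDirection A B C x y z =
      orthocenterCombination A B C (x⁻¹ + y⁻¹ + z⁻¹) (x • A + y • B + z • C)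
        (isotomicPoint A B C x y z) := by
  have hs := h.steinerForm_ne_zero
  have hx := h.x_ne_zero
  have hy := h.y_ne_zero
  have hz := h.z_ne_zero
  have h2 : (2 : k) ≠ 0 := Invertible.ne_zero 2
  have h4 : (4 : k) ≠ 0 := four_ne_zero_of_invertible_two
  obtain rfl : t = (steinerForm x y z - x ^ 2) / (4 * (x * y * z) * steinerForm x y z) :=
    (eq_div_iff (by simp [*])).2 (by linear_combination ht)
  obtain rfl : z = 1 - x - y := by linear_combination h.sum_eq_one
  rw [orthocenterCombination, traceDirection, isotomicPoint]
  match_scalars <;> field_simp <;> rw [steinerForm] <;> ring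

/-- `H` is a generalized orthocenter: `AH ∥ QD` and `BH ∥ QE`. These two lines already meet in a
single point, through which the third one passes as well. -/
def IsGeneralizedOrthocenter (k : Type*) [Field k] {V : Type*} [AddCommGroup V] [Module k V]
    (A B D E Q H : V) : Prop :=
  Proportional k (H - A) (D - Q) ∧ Proportional k (H - B) (E - Q)

/-- `O` is a generalized circumcenter: `OD₀ ∥ QD` and `OE₀ ∥ QE` for the midpoints `D₀`, `E₀` of
`BC`, `CA`. As for the orthocenter, two lines suffice. -/
def IsGeneralizedCircumcenter (k : Type*) [Field k] [Invertible (2 : k)] {V : Type*}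
    [AddCommGroup V] [Module k V] (A B C D E Q O : V) : Prop :=
  Proportional k (midpoint k B C - O) (D - Q) ∧ Proportional k (midpoint k C A - O) (E - Q)

theorem IsGeneralizedOrthocenter.eq_orthocenterCombination [Invertible (2 : k)]
    (hABC : AffineIndependent k ![A, B, C]) (h : IsAdmissible x y z)
    (hP : P = x • A + y • B + z • C) (hP' : P' = isotomicPoint A B C x y z)
    (hD : IsTrace k A B C P D) (hE : IsTrace k B A C P E)
    (hH : IsGeneralizedOrthocenter k A B D E (complementMap k A B C P') H) :
    H = orthocenterCombination A B C (x⁻¹ + y⁻¹ + z⁻¹) P P' := by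
  obtain ⟨t, ht⟩ := exists_eq_add_smul_traceDirection hABC h hP hP' hD hH.1
  obtain ⟨u, hu⟩ := exists_eq_add_smul_traceDirection hABC.comm_left h.swap
    (by rw [hP, add_comm (x • A)]) (by rw [hP', isotomicPoint_swap]) hE
    (complementMap_swap (k := k) A B C P' ▸ hH.2)
  rw [hP, hP', ht, add_smul_traceDirection_eq_orthocenterCombination h
    (coeff_of_add_smul_traceDirection_eq hABC h.z_ne_zero (ht.symm.trans hu))]

theorem two_smul_midpoint_sub [Invertible (2 : k)] (A B C O : V) :
    (2 : k) • (midpoint k B C - O) = A + B + C - (2 : k) • O - A := by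
  rw [midpoint_eq_smul_add, smul_sub, smul_invOf_smul]
  abel

theorem IsGeneralizedCircumcenter.anticomplement [Invertible (2 : k)] {Q : V}
    (h : IsGeneralizedCircumcenter k A B C D E Q O) :
    IsGeneralizedOrthocenter k A B D E Q (A + B + C - (2 : k) • O) := by
  have h2 : (2 : k) ≠ 0 := Invertible.ne_zero 2
  constructor
  · exact two_smul_midpoint_sub (k := k) A B C O ▸ h.1.smul_left h2
  · rw [add_rotate, ← two_smul_midpoint_sub]
    exact h.2.smul_left h2

theorem IsGeneralizedCircumcenter.eq_complementMap_orthocenterCombination [Invertible (2 : k)]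
    (hABC : AffineIndependent k ![A, B, C]) (h : IsAdmissible x y z)
    (hP : P = x • A + y • B + z • C) (hP' : P' = isotomicPoint A B C x y z)
    (hD : IsTrace k A B C P D) (hE : IsTrace k B A C P E)
    (hO : IsGeneralizedCircumcenter k A B C D E (complementMap k A B C P') O) :
    O = complementMap k A B C (orthocenterCombination A B C (x⁻¹ + y⁻¹ + z⁻¹) P P') := by
  rw [← hO.anticomplement.eq_orthocenterCombination hABC h hP hP' hD hE, complementMap,
    sub_sub_cancel, invOf_smul_smul]

theorem map_complementMap [Invertible (2 : k)] (η : V →ᵃ[k] V) (hG : (3 : k) • G = A + B + C)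
    (hηG : η G = G) (X : V) : η (complementMap k A B C X) = complementMap k A B C (η X) := by
  have hcomp (Y : V) : complementMap k A B C Y = (3 * ⅟2 : k) • G + (-⅟2 : k) • Y := by
    rw [complementMap, ← hG]
    module
  rw [hcomp, hcomp, Convex.combo_affine_apply (by linear_combination invOf_mul_self (2 : k)), hηG]

theorem map_orthocenterCombination [Invertible (2 : k)] (η : V →ᵃ[k] V)
    (hG : (3 : k) • G = A + B + C) (hηG : η G = G) (ρ : k) (X Y : V) :
    η (orthocenterCombination A B C ρ X Y) = orthocenterCombination A B C ρ (η X) (η Y) := by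
  have hcomb (X Y : V) : orthocenterCombination A B C ρ X Y =
      (3 * ((1 - ρ) / 4)) • G + (ρ / 2) • X + ((ρ + 1) / 4) • Y := by
    rw [orthocenterCombination, ← hG]
    module
  have h2 : (2 : k) ≠ 0 := Invertible.ne_zero 2
  have h4 : (4 : k) ≠ 0 := four_ne_zero_of_invertible_two
  rw [hcomb, hcomb, affineMap_smul_add_smul_add_smul η (by field_simp; ring), hηG]

theorem orthocenterCombination_swap_sub [Invertible (2 : k)] (A B C : V) (ρ : k) (X Y : V) :
    orthocenterCombination A B C ρ Y X - orthocenterCombination A B C ρ X Y =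
      ((ρ - 1) / 4) • (Y - X) := by
  have h2 : (2 : k) ≠ 0 := Invertible.ne_zero 2
  have h4 : (4 : k) ≠ 0 := four_ne_zero_of_invertible_two
  simp only [orthocenterCombination]
  match_scalars <;> field_simp <;> ring

theorem complementMap_sub [Invertible (2 : k)] (A B C X Y : V) :
    complementMap k A B C Y - complementMap k A B C X = (-⅟2 : k) • (Y - X) := by
  simp only [complementMap]
  module

theorem eta_maps_O_to_O'_and_H_to_H'_general [Invertible (2 : k)] {D' E' : V}
    (hABC : AffineIndependent k ![A, B, C]) (hG : (3 : k) • G = A + B + C)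
    (h : IsAdmissible x y z)
    (hP : P = x • A + y • B + z • C) (hP' : P' = isotomicPoint A B C x y z)
    (hD : IsTrace k A B C P D) (hE : IsTrace k B A C P E)
    (hD' : IsTrace k A B C P' D') (hE' : IsTrace k B A C P' E')
    (hO : IsGeneralizedCircumcenter k A B C D E (complementMap k A B C P') O)
    (hH : IsGeneralizedOrthocenter k A B D E (complementMap k A B C P') H)
    (hO' : IsGeneralizedCircumcenter k A B C D' E' (complementMap k A B C P) O')
    (hH' : IsGeneralizedOrthocenter k A B D' E' (complementMap k A B C P) H') :
    (∀ η : V →ᵃ[k] V, η G = G → η P = P' → η P' = P → η O = O' ∧ η H = H') ∧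
      Proportional k (O' - O) (P' - P) ∧ Proportional k (H' - H) (P' - P) := by
  have hPP' := hP.trans (isotomicPoint_isotomic h A B C).symm
  have eqH := hH.eq_orthocenterCombination hABC h hP hP' hD hE
  have eqH' := hH'.eq_orthocenterCombination hABC h.isotomic hP' hPP' hD' hE'
  have eqO := hO.eq_complementMap_orthocenterCombination hABC h hP hP' hD hE
  have eqO' := hO'.eq_complementMap_orthocenterCombination hABC h.isotomic hP' hPP' hD' hE'
  rw [inv_add_inv_add_inv_isotomic h] at eqH' eqO'
  have hHH' := orthocenterCombination_swap_sub A B C (x⁻¹ + y⁻¹ + z⁻¹) P P'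
  rw [← eqH, ← eqH'] at hHH'
  rw [← eqH] at eqO
  rw [← eqH'] at eqO'
  have hηH (η : V →ᵃ[k] V) (hηG : η G = G) (hηP : η P = P') (hηP' : η P' = P) : η H = H' := by
    rw [eqH, eqH', map_orthocenterCombination η hG hηG, hηP, hηP']
  have hOO' : O' - O = (-⅟2 * ((x⁻¹ + y⁻¹ + z⁻¹ - 1) / 4)) • (P' - P) := by
    rw [eqO, eqO', complementMap_sub, hHH', smul_smul]
  refine ⟨fun η hηG hηP hηP' ↦ ⟨?_, hηH η hηG hηP hηP'⟩, ⟨_, .inl hOO'⟩, ⟨_, .inl hHH'⟩⟩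
  rw [eqO, eqO', map_complementMap η hG hηG, hηH η hηG hηP hηP']

end GeneralPosition

theorem three_smul_cent (A B C : Pt) : (3 : ℝ) • cent A B C = A + B + C :=
  smul_inv_smul₀ three_ne_zero _

theorem homoth_cent_neg_half (A B C X : Pt) :
    homoth (cent A B C) (-(1 / 2)) X = complementMap ℝ A B C X := by
  rw [complementMap, ← three_smul_cent, homoth, invOf_eq_inv]
  module

theorem eta_maps_O_to_O'_and_H_to_H'
    (A B C P P' Q Q' D E F D₃ E₃ F₃ : Pt) (x y z : ℝ)
    (hABC : AffineIndependent ℝ ![A, B, C])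
    (hsum : x + y + z = 1)
    (hPco : P = x • A + y • B + z • C)
    (hx0 : x ≠ 0) (hy0 : y ≠ 0) (hz0 : z ≠ 0)
    (hx1 : x ≠ 1) (hy1 : y ≠ 1) (hz1 : z ≠ 1)
    (hst : x * y + y * z + z * x ≠ 0)
    (hP' : P' = (y * z / (x * y + y * z + z * x)) • A
        + (x * z / (x * y + y * z + z * x)) • B
        + (x * y / (x * y + y * z + z * x)) • C)
    (hQ : Q = homoth (cent A B C) (-(1 / 2)) P')
    (hQ' : Q' = homoth (cent A B C) (-(1 / 2)) P)
    (hD : Collinear ℝ {A, P, D} ∧ Collinear ℝ {B, C, D})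
    (hE : Collinear ℝ {B, P, E} ∧ Collinear ℝ {A, C, E})
    (hF : Collinear ℝ {C, P, F} ∧ Collinear ℝ {A, B, F})
    (hD₃ : Collinear ℝ {A, P', D₃} ∧ Collinear ℝ {B, C, D₃})
    (hE₃ : Collinear ℝ {B, P', E₃} ∧ Collinear ℝ {A, C, E₃})
    (hF₃ : Collinear ℝ {C, P', F₃} ∧ Collinear ℝ {A, B, F₃})
    (hxy : x ≠ y) (hyz : y ≠ z) (hxz : x ≠ z)
    (O H : Pt)
    (hO : Par (midpoint ℝ B C - O) (D - Q) ∧ Par (midpoint ℝ C A - O) (E - Q) ∧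
          Par (midpoint ℝ A B - O) (F - Q))
    (hH : Par (H - A) (D - Q) ∧ Par (H - B) (E - Q) ∧ Par (H - C) (F - Q))
    (O' H' : Pt)
    (hO' : Par (midpoint ℝ B C - O') (D₃ - Q') ∧ Par (midpoint ℝ C A - O') (E₃ - Q') ∧
           Par (midpoint ℝ A B - O') (F₃ - Q'))
    (hH' : Par (H' - A) (D₃ - Q') ∧ Par (H' - B) (E₃ - Q') ∧ Par (H' - C) (F₃ - Q'))
    (V : Pt) (hV : Collinear ℝ {P, Q, V} ∧ Collinear ℝ {P', Q', V})
    (η : Pt →ᵃ[ℝ] Pt)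
    (hinv : ∀ X : Pt, η (η X) = X)
    (hfix : ∀ X ∈ lineThru (cent A B C) V, η X = X)
    (hηP : η P = P') :
    η O = O' ∧ η H = H' ∧ Par (O' - O) (P' - P) ∧ Par (H' - H) (P' - P) := by
  have hηP' : η P' = P := by rw [← hηP, hinv]
  rw [homoth_cent_neg_half] at hQ hQ'
  subst hQ hQ'
  obtain ⟨hη, hOO', hHH'⟩ := eta_maps_O_to_O'_and_H_to_H'_general hABC (three_smul_cent A B C)
    ⟨hsum, hx0, hy0, hz0, hx1, hy1, hz1, hst⟩ hPco hP' hD hE hD₃ hE₃ ⟨hO.1, hO.2.1⟩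
    ⟨hH.1, hH.2.1⟩ ⟨hO'.1, hO'.2.1⟩ ⟨hH'.1, hH'.2.1⟩
  obtain ⟨hηO, hηH⟩ := hη η (hfix _ ⟨0, by simp⟩) hηP hηP'
  exact ⟨hηO, hηH, hOO', hHH'⟩
end
end

section
/- Let Q_a = T_{P′}⁻¹(A), Q_b = T_{P′}⁻¹(B), Q_c = T_{P′}⁻¹(C) (the vertices of the anticevian triangle of Q with respect to ABC), and let P_a = ι⁻¹(K⁻¹(Q_a)), P_b = ι⁻¹(K⁻¹(Q_b)), P_c = ι⁻¹(K⁻¹(Q_c)) be their anti-isotomcomplements. Assume each of P_a, P_b, P_c also satisfies the general-position hypotheses imposed on P. Then P, P_a, P_b, P_c all give rise to the same generalized circumcenter O and the same generalized orthocenter H. -/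
noncomputable section

/-- `O` and `H` are a generalized circumcenter and generalized orthocenter of the
admissible point `P` with respect to triangle `ABC`. -/
def IsGenOH (A B C P O H : Pt) : Prop :=
  ∃ (x y z : ℝ) (P' Q D E F : Pt),
    x + y + z = 1 ∧ P = x • A + y • B + z • C ∧
    x ≠ 0 ∧ y ≠ 0 ∧ z ≠ 0 ∧ x ≠ 1 ∧ y ≠ 1 ∧ z ≠ 1 ∧
    x * y + y * z + z * x ≠ 0 ∧
    P' = (y * z / (x * y + y * z + z * x)) • A
      + (x * z / (x * y + y * z + z * x)) • B
      + (x * y / (x * y + y * z + z * x)) • C ∧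
    Q = homoth (cent A B C) (-(1 / 2)) P' ∧
    Collinear ℝ {A, P, D} ∧ Collinear ℝ {B, C, D} ∧
    Collinear ℝ {B, P, E} ∧ Collinear ℝ {A, C, E} ∧
    Collinear ℝ {C, P, F} ∧ Collinear ℝ {A, B, F} ∧
    Par (midpoint ℝ B C - O) (D - Q) ∧
    Par (midpoint ℝ C A - O) (E - Q) ∧
    Par (midpoint ℝ A B - O) (F - Q) ∧
    Par (H - A) (D - Q) ∧ Par (H - B) (E - Q) ∧ Par (H - C) (F - Q)

/-! Let `Q = (u : v : w)` be the isotomcomplement of `P` in barycentric coordinates. Then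
`P = (1 / (v + w - u) : 1 / (w + u - v) : 1 / (u + v - w))`, so `P` has the trace
`D = (0 : u + v - w : u + w - v)` on `BC`, and `D - Q` is proportional to
`(-2u² : u² + v² - w² : u² + w² - v²)`. The generalized circumcenter and orthocenter therefore
depend only on the squares `u²`, `v²`, `w²`, which do not change when `Q` is replaced by a vertex
`(-u : v : w)`, `(u : -v : w)` or `(u : v : -w)` of its anticevian triangle. -/

section Barycentric

variable {k V W : Type*} [Field k] [AddCommGroup V] [Module k V] [AddCommGroup W] [Module k W]
  {A B C D E F : V} {x y z x' y' z' : k}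

/-- The point with homogeneous barycentric coordinates `(x : y : z)` with respect to `ABC`;
it is the junk value `0` when `x + y + z = 0`. -/
def bary (A B C : V) (x y z : k) : V :=
  (x / (x + y + z)) • A + (y / (x + y + z)) • B + (z / (x + y + z)) • C

lemma bary_of_sum_eq_one (h : x + y + z = 1) : bary A B C x y z = x • A + y • B + z • C := by
  simp only [bary, h, div_one]

lemma bary_rotate (A B C : V) (x y z : k) : bary B C A y z x = bary A B C x y z := by
  rw [bary, bary, ← add_rotate x y z]
  abel

lemma bary_mul_left {c : k} (hc : c ≠ 0) :
    bary A B C (c * x) (c * y) (c * z) = bary A B C x y z := by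
  simp only [bary, ← mul_add, mul_div_mul_left _ _ hc]

lemma sum_smul_bary (h : x + y + z ≠ 0) :
    (x + y + z) • bary A B C x y z = x • A + y • B + z • C := by
  simp only [bary, smul_add, smul_smul, mul_div_cancel₀ _ h]

lemma map_bary (T : V →ᵃ[k] W) (h : x + y + z ≠ 0) :
    T (bary A B C x y z) = bary (T A) (T B) (T C) x y z := by
  rw [T.decomp]
  simp only [bary, Pi.add_apply, map_add, map_smul]
  match_scalars
  all_goals field_simp

lemma bary_eq_lineMap (hyz : y + z ≠ 0) (h : x + y + z ≠ 0) :
    bary A B C x y z = AffineMap.lineMap A (bary A B C 0 y z) ((y + z) / (x + y + z)) := by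
  rw [AffineMap.lineMap_apply_module, bary, bary, zero_add]
  match_scalars
  all_goals field_simp
  ring

lemma barycentric_coords_unique (hABC : AffineIndependent k ![A, B, C])
    (hsum : x + y + z = x' + y' + z')
    (h : x • A + y • B + z • C = x' • A + y' • B + z' • C) : x = x' ∧ y = y' ∧ z = z' := by
  have hzero := hABC.eq_zero_of_sum_eq_zero (s := Finset.univ) (w := ![x - x', y - y', z - z'])
    (by simp only [Fin.sum_univ_three, Matrix.cons_val]; linear_combination hsum)
    (by
      simp only [Fin.sum_univ_three, Matrix.cons_val]
      linear_combination (norm := module) h)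
  exact ⟨sub_eq_zero.1 (hzero 0 (Finset.mem_univ _)), sub_eq_zero.1 (hzero 1 (Finset.mem_univ _)),
    sub_eq_zero.1 (hzero 2 (Finset.mem_univ _))⟩

lemma proportional_of_bary_eq_bary (hABC : AffineIndependent k ![A, B, C])
    (h : x + y + z ≠ 0) (h' : x' + y' + z' ≠ 0) (heq : bary A B C x y z = bary A B C x' y' z') :
    ∃ c ≠ 0, x = c * x' ∧ y = c * y' ∧ z = c * z' := by
  obtain ⟨hx, hy, hz⟩ := barycentric_coords_unique hABC
    (by rw [← add_div, ← add_div, ← add_div, ← add_div, div_self h, div_self h']) heq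
  refine ⟨(x + y + z) / (x' + y' + z'), div_ne_zero h h', ?_, ?_, ?_⟩
  · rw [div_mul_comm, ← hx, div_mul_cancel₀ _ h]
  · rw [div_mul_comm, ← hy, div_mul_cancel₀ _ h]
  · rw [div_mul_comm, ← hz, div_mul_cancel₀ _ h]

lemma collinear_vertex_bary_trace (hyz : y + z ≠ 0) (h : x + y + z ≠ 0) :
    Collinear k {A, bary A B C x y z, bary A B C 0 y z} := by
  rw [Set.insert_comm, bary_eq_lineMap hyz h]
  exact collinear_insert_of_mem_affineSpan_pair (AffineMap.lineMap_mem_affineSpan_pair _ _ _)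

lemma bary_zero_eq_lineMap (hyz : y + z ≠ 0) :
    bary A B C 0 y z = AffineMap.lineMap B C (z / (y + z)) := by
  rw [AffineMap.lineMap_apply_module, bary, zero_add]
  match_scalars <;> field_simp <;> ring

lemma collinear_side_bary_trace (hyz : y + z ≠ 0) : Collinear k {B, C, bary A B C 0 y z} := by
  rw [Set.pair_comm C, Set.insert_comm B, bary_zero_eq_lineMap hyz]
  exact collinear_insert_of_mem_affineSpan_pair (AffineMap.lineMap_mem_affineSpan_pair _ _ _)

lemma vertex_ne_bary (hABC : AffineIndependent k ![A, B, C]) (hyz : y + z ≠ 0)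
    (h : x + y + z ≠ 0) : A ≠ bary A B C x y z := by
  intro hA
  have hsum := sum_smul_bary (A := A) (B := B) (C := C) h
  rw [← hA] at hsum
  obtain ⟨-, hy, hz⟩ := barycentric_coords_unique hABC (x := x) (y := y) (z := z)
    (x' := x + y + z) (y' := 0) (z' := 0)
    (by ring) (by rw [← hsum]; module)
  exact hyz (by rw [hy, hz, add_zero])

lemma collinear_trace_iff (hABC : AffineIndependent k ![A, B, C]) (hyz : y + z ≠ 0)
    (h : x + y + z ≠ 0) :
    Collinear k {A, bary A B C x y z, D} ∧ Collinear k {B, C, D} ↔ D = bary A B C 0 y z := by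
  refine ⟨fun ⟨hAP, hBC⟩ ↦ ?_, ?_⟩
  · have hne : B ≠ C := hABC.injective.ne (a₁ := 1) (a₂ := 2) (by decide)
    obtain ⟨t, rfl⟩ := mem_affineSpan_pair_iff_exists_lineMap_eq.1
      (hBC.mem_affineSpan_of_mem_of_ne (by simp) (by simp) (p₃ := D) (by simp) hne)
    obtain ⟨r, hr⟩ := mem_affineSpan_pair_iff_exists_lineMap_eq.1
      (hAP.mem_affineSpan_of_mem_of_ne (by simp) (by simp) (p₃ := AffineMap.lineMap B C t) (by simp)
        (vertex_ne_bary hABC hyz h))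
    simp only [AffineMap.lineMap_apply_module, bary] at hr
    obtain ⟨-, hB, hC⟩ := barycentric_coords_unique hABC
      (x := 1 - r + r * (x / (x + y + z))) (y := r * (y / (x + y + z)))
      (z := r * (z / (x + y + z))) (x' := 0) (y' := 1 - t) (z' := t)
      (by field_simp; ring) (by linear_combination (norm := module) hr)
    have ht : t = z / (y + z) := by
      field_simp at hB hC ⊢
      exact mul_left_cancel₀ h (by linear_combination z * hB - y * hC)
    rw [ht, bary_zero_eq_lineMap hyz]
  · rintro rfl
    exact ⟨collinear_vertex_bary_trace hyz h, collinear_side_bary_trace hyz⟩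

lemma bary_anticevian [NeZero (2 : k)] (A B C : V) {p q r : k} (hp : p ≠ 0) (hqr : q + r ≠ 0)
    (hrp : r + p ≠ 0) (hpq : p + q ≠ 0) :
    bary (bary A B C 0 q r) (bary A B C p 0 r) (bary A B C p q 0) (-(q + r)) (r + p) (p + q) =
      A := by
  have hsum : -(q + r) + (r + p) + (p + q) = 2 * p := by ring
  rw [bary, bary, bary, bary, hsum, zero_add, add_zero, add_zero, add_comm p r]
  have htwo := two_ne_zero' k
  match_scalars <;> field_simp <;> ring

lemma symm_apply_left_eq_anticevian [NeZero (2 : k)] (T : V ≃ᵃ[k] V) {p q r : k} (hp : p ≠ 0)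
    (hqr : q + r ≠ 0) (hrp : r + p ≠ 0) (hpq : p + q ≠ 0) (hA : T A = bary A B C 0 q r)
    (hB : T B = bary A B C p 0 r) (hC : T C = bary A B C p q 0) :
    T.symm A = bary A B C (-(q + r)) (r + p) (p + q) := by
  have hsum : -(q + r) + (r + p) + (p + q) ≠ 0 := by
    rw [show -(q + r) + (r + p) + (p + q) = 2 * p by ring]
    exact mul_ne_zero two_ne_zero hp
  have hT := map_bary T.toAffineMap (A := A) (B := B) (C := C) hsum
  simp only [AffineEquiv.coe_toAffineMap, hA, hB, hC] at hT
  rw [AffineEquiv.symm_apply_eq, hT, bary_anticevian A B C hp hqr hrp hpq]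

lemma symm_apply_eq_anticevian [NeZero (2 : k)] (T : V ≃ᵃ[k] V) {p q r : k} (hp : p ≠ 0)
    (hq : q ≠ 0) (hr : r ≠ 0) (hqr : q + r ≠ 0) (hrp : r + p ≠ 0) (hpq : p + q ≠ 0)
    (hA : T A = bary A B C 0 q r) (hB : T B = bary A B C p 0 r) (hC : T C = bary A B C p q 0) :
    T.symm A = bary A B C (-(q + r)) (r + p) (p + q) ∧
    T.symm B = bary A B C (q + r) (-(r + p)) (p + q) ∧
    T.symm C = bary A B C (q + r) (r + p) (-(p + q)) := by
  refine ⟨symm_apply_left_eq_anticevian T hp hqr hrp hpq hA hB hC, ?_, ?_⟩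
  · rw [← bary_rotate A B C] at hA hB hC ⊢
    exact symm_apply_left_eq_anticevian T hq hrp hpq hqr hB hC hA
  · rw [bary_rotate C A B] at hA hB hC ⊢
    exact symm_apply_left_eq_anticevian T hr hpq hqr hrp hC hA hB

/-- `DEF` is the cevian triangle of `P` with respect to `ABC`. -/
def IsCevianTriangle (k : Type*) {V : Type*} [Field k] [AddCommGroup V] [Module k V]
    (A B C P D E F : V) : Prop :=
  (Collinear k {A, P, D} ∧ Collinear k {B, C, D}) ∧
  (Collinear k {B, P, E} ∧ Collinear k {A, C, E}) ∧
  (Collinear k {C, P, F} ∧ Collinear k {A, B, F})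

lemma isCevianTriangle_bary_iff (hABC : AffineIndependent k ![A, B, C]) (hyz : y + z ≠ 0)
    (hzx : z + x ≠ 0) (hxy : x + y ≠ 0) (h : x + y + z ≠ 0) :
    IsCevianTriangle k A B C (bary A B C x y z) D E F ↔
      D = bary A B C 0 y z ∧ E = bary A B C x 0 z ∧ F = bary A B C x y 0 := by
  have hBCA := hABC.comm_left.comm_right
  have hCAB := hBCA.comm_left.comm_right
  have hD := collinear_trace_iff (D := D) hABC hyz h
  have hE := collinear_trace_iff (D := E) hBCA hzx (by rwa [add_rotate, add_rotate])
  have hF := collinear_trace_iff (D := F) hCAB hxy (by rwa [add_rotate])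
  rw [bary_rotate A B C x y z, bary_rotate A B C x 0 z, Set.insert_comm C] at hE
  rw [← bary_rotate C A B z x y, ← bary_rotate C A B 0 x y] at hF
  rw [IsCevianTriangle, hD, hE, hF]

/-- The isotomic conjugate of the point with homogeneous barycentric coordinates `(x : y : z)`,
given by its normalized coordinates; it is the junk value `0` when `xy + yz + zx = 0`. -/
def isotomicConj (A B C : V) (x y z : k) : V :=
  (y * z / (x * y + y * z + z * x)) • A + (x * z / (x * y + y * z + z * x)) • B
    + (x * y / (x * y + y * z + z * x)) • C

lemma isotomicConj_eq_bary : isotomicConj A B C x y z = bary A B C (y * z) (z * x) (x * y) := by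
  rw [isotomicConj, bary, mul_comm x z, add_rotate (x * y)]

/-- The direction of the line from the isotomcomplement `Q = (u : v : w)` of a point to the trace of
that point on `BC`, as a function of `p = u²`, `q = v²`, `r = w²`. -/
def traceDir (A B C : V) (p q r : k) : V :=
  (-2 * p) • A + (p + q - r) • B + (p + r - q) • C

lemma bary_zero_sub_bary_eq_smul_traceDir [NeZero (2 : k)] {u v w : k} (hu : u ≠ 0)
    (h : u + v + w ≠ 0) :
    bary A B C 0 (u + v - w) (u + w - v) - bary A B C u v w =
      (2 * u * (u + v + w))⁻¹ • traceDir A B C (u ^ 2) (v ^ 2) (w ^ 2) := by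
  have htwo := two_ne_zero' k
  have hsum : 0 + (u + v - w) + (u + w - v) = 2 * u := by ring
  rw [bary, bary, traceDir, hsum]
  match_scalars <;> field_simp <;> ring

lemma exists_trace_sub_eq_smul_traceDir [NeZero (2 : k)] {u v w c : k} (hx : x ≠ 0)
    (hyz : y + z ≠ 0) (hc : c ≠ 0) (h : u + v + w ≠ 0) (hu : u = c * (z * x + x * y))
    (hv : v = c * (x * y + y * z)) (hw : w = c * (y * z + z * x)) :
    ∃ a : k, a ≠ 0 ∧
      bary A B C 0 y z - bary A B C u v w = a • traceDir A B C (u ^ 2) (v ^ 2) (w ^ 2) := by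
  have hu0 : u ≠ 0 := by
    rw [hu, add_comm, mul_comm z x, ← mul_add]
    exact mul_ne_zero hc (mul_ne_zero hx hyz)
  have hy : 2 * c * x * y = u + v - w := by rw [hu, hv, hw]; ring
  have hz : 2 * c * x * z = u + w - v := by rw [hu, hv, hw]; ring
  have hD : bary A B C 0 y z = bary A B C 0 (u + v - w) (u + w - v) := by
    rw [← hy, ← hz, ← bary_mul_left (mul_ne_zero (mul_ne_zero two_ne_zero hc) hx), mul_zero]
  refine ⟨(2 * u * (u + v + w))⁻¹, ?_, ?_⟩
  · exact inv_ne_zero (mul_ne_zero (mul_ne_zero two_ne_zero hu0) h)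
  · rw [hD, bary_zero_sub_bary_eq_smul_traceDir hu0 h]

end Barycentric

section GeneralizedCenters

variable {A B C P Q D E F O H d e f : Pt} {x y z u v w : ℝ}

lemma par_smul_right_iff {p q : Pt} {c : ℝ} (hc : c ≠ 0) : Par p (c • q) ↔ Par p q := by
  have smul_right {p q : Pt} {c : ℝ} (hc : c ≠ 0) (h : Par p q) : Par p (c • q) := by
    obtain ⟨t, rfl | rfl⟩ := h
    · exact ⟨t / c, Or.inl (by rw [smul_smul, div_mul_cancel₀ _ hc])⟩
    · exact ⟨c * t, Or.inr (smul_smul _ _ _)⟩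
  exact ⟨fun h ↦ by simpa only [inv_smul_smul₀ hc] using smul_right (inv_ne_zero hc) h,
    smul_right hc⟩

/-- The defining conditions of the generalized circumcenter `O` and orthocenter `H`, with `d`, `e`,
`f` in place of the directions `QD`, `QE`, `QF`. -/
def IsGenOHAlong (A B C O H d e f : Pt) : Prop :=
  (Par (midpoint ℝ B C - O) d ∧ Par (midpoint ℝ C A - O) e ∧ Par (midpoint ℝ A B - O) f) ∧
  (Par (H - A) d ∧ Par (H - B) e ∧ Par (H - C) f)

lemma isGenOHAlong_smul_iff {a b c : ℝ} (ha : a ≠ 0) (hb : b ≠ 0) (hc : c ≠ 0) :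
    IsGenOHAlong A B C O H (a • d) (b • e) (c • f) ↔ IsGenOHAlong A B C O H d e f := by
  simp only [IsGenOHAlong, par_smul_right_iff ha, par_smul_right_iff hb, par_smul_right_iff hc]

lemma homoth_eq_iff_of_mul_eq_one {Z X Y : Pt} {r r' : ℝ} (h : r * r' = 1) :
    homoth Z r X = Y ↔ homoth Z r' Y = X := by
  constructor <;> rintro rfl <;> simp [homoth, smul_smul, h, mul_comm r' r]

lemma complement_bary (h : x + y + z ≠ 0) :
    homoth (cent A B C) (-(1 / 2)) (bary A B C x y z) = bary A B C (y + z) (z + x) (x + y) := by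
  have hsum : y + z + (z + x) + (x + y) = 2 * (x + y + z) := by ring
  rw [homoth, cent, bary, bary, hsum]
  match_scalars <;> field_simp <;> ring

/-- `x`, `y`, `z` are the normalized barycentric coordinates of an admissible point: off the sides
of `ABC` and of its anticomplementary triangle, and off the Steiner circumellipse. -/
structure IsAdmissible_s3 (x y z : ℝ) : Prop where
  sum_eq_one : x + y + z = 1
  ne_zero : x ≠ 0 ∧ y ≠ 0 ∧ z ≠ 0
  ne_one : x ≠ 1 ∧ y ≠ 1 ∧ z ≠ 1
  isotomic_sum_ne_zero : x * y + y * z + z * x ≠ 0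

lemma IsAdmissible_s3.add_ne_zero (h : IsAdmissible_s3 x y z) : y + z ≠ 0 ∧ z + x ≠ 0 ∧ x + y ≠ 0 :=
  ⟨fun h0 ↦ h.ne_one.1 (by linear_combination h.sum_eq_one - h0),
    fun h0 ↦ h.ne_one.2.1 (by linear_combination h.sum_eq_one - h0),
    fun h0 ↦ h.ne_one.2.2 (by linear_combination h.sum_eq_one - h0)⟩

lemma IsAdmissible_s3.isCevianTriangle_iff (hxyz : IsAdmissible_s3 x y z)
    (hABC : AffineIndependent ℝ ![A, B, C]) (hP : P = x • A + y • B + z • C) :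
    IsCevianTriangle ℝ A B C P D E F ↔
      D = bary A B C 0 y z ∧ E = bary A B C x 0 z ∧ F = bary A B C x y 0 := by
  obtain ⟨hyz, hzx, hxy⟩ := hxyz.add_ne_zero
  rw [hP, ← bary_of_sum_eq_one hxyz.sum_eq_one]
  exact isCevianTriangle_bary_iff hABC hyz hzx hxy (hxyz.sum_eq_one ▸ one_ne_zero)

lemma complement_isotomicConj (hst : x * y + y * z + z * x ≠ 0) :
    homoth (cent A B C) (-(1 / 2)) (isotomicConj A B C x y z) =
      bary A B C (z * x + x * y) (x * y + y * z) (y * z + z * x) := by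
  rw [isotomicConj_eq_bary, complement_bary (by rwa [← add_rotate])]

lemma isGenOH_iff_isGenOHAlong (hABC : AffineIndependent ℝ ![A, B, C]) (hxyz : IsAdmissible_s3 x y z)
    (hP : P = x • A + y • B + z • C)
    (hQ : homoth (cent A B C) (-2) Q = isotomicConj A B C x y z) :
    IsGenOH A B C P O H ↔ IsGenOHAlong A B C O H (bary A B C 0 y z - Q) (bary A B C x 0 z - Q)
      (bary A B C x y 0 - Q) := by
  have hQ := (homoth_eq_iff_of_mul_eq_one (r' := -(1 / 2)) (by norm_num)).1 hQ
  constructor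
  · rintro ⟨x', y', z', _, Q', D, E, F, hsum, hP', -, -, -, -, -, -, -, rfl, hQ', hAD, hBC, hBE,
      hAC, hCF, hAB, hO₁, hO₂, hO₃, hH⟩
    obtain ⟨rfl, rfl, rfl⟩ :=
      barycentric_coords_unique hABC (hsum.trans hxyz.sum_eq_one.symm) (hP'.symm.trans hP)
    obtain ⟨rfl, rfl, rfl⟩ :=
      (hxyz.isCevianTriangle_iff hABC hP).1 ⟨⟨hAD, hBC⟩, ⟨hBE, hAC⟩, hCF, hAB⟩
    obtain rfl : Q' = Q := hQ'.trans hQ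
    exact ⟨⟨hO₁, hO₂, hO₃⟩, hH⟩
  · rintro ⟨⟨hO₁, hO₂, hO₃⟩, hH⟩
    obtain ⟨⟨hAD, hBC⟩, ⟨hBE, hAC⟩, hCF, hAB⟩ :=
      (hxyz.isCevianTriangle_iff hABC hP).2 ⟨rfl, rfl, rfl⟩
    obtain ⟨hsum, ⟨hx0, hy0, hz0⟩, ⟨hx1, hy1, hz1⟩, hst⟩ := hxyz
    exact ⟨x, y, z, _, Q, _, _, _, hsum, hP, hx0, hy0, hz0, hx1, hy1, hz1, hst, rfl, hQ.symm, hAD,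
      hBC, hBE, hAC, hCF, hAB, hO₁, hO₂, hO₃, hH⟩

lemma isGenOH_iff_traceDir (hABC : AffineIndependent ℝ ![A, B, C]) (hxyz : IsAdmissible_s3 x y z)
    (hP : P = x • A + y • B + z • C)
    (hQP : homoth (cent A B C) (-2) Q = isotomicConj A B C x y z)
    (hQ : Q = bary A B C u v w) (h : u + v + w ≠ 0) :
    IsGenOH A B C P O H ↔
      IsGenOHAlong A B C O H (traceDir A B C (u ^ 2) (v ^ 2) (w ^ 2))
        (traceDir B C A (v ^ 2) (w ^ 2) (u ^ 2)) (traceDir C A B (w ^ 2) (u ^ 2) (v ^ 2)) := by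
  obtain ⟨hx, hy, hz⟩ := hxyz.ne_zero
  obtain ⟨hyz, hzx, hxy⟩ := hxyz.add_ne_zero
  have hQ' : bary A B C u v w = bary A B C (z * x + x * y) (x * y + y * z) (y * z + z * x) := by
    rw [← hQ, ← complement_isotomicConj hxyz.isotomic_sum_ne_zero, ← hQP]
    exact ((homoth_eq_iff_of_mul_eq_one (r := -2) (by norm_num)).1 rfl).symm
  obtain ⟨c, hc, hu, hv, hw⟩ := proportional_of_bary_eq_bary hABC h
    (fun h0 ↦ hxyz.isotomic_sum_ne_zero (by linear_combination h0 / 2)) hQ'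
  obtain ⟨a, ha, hD⟩ :=
    exists_trace_sub_eq_smul_traceDir (A := A) (B := B) (C := C) hx hyz hc h hu hv hw
  obtain ⟨b, hb, hE⟩ :=
    exists_trace_sub_eq_smul_traceDir (A := B) (B := C) (C := A) hy hzx hc (by rwa [← add_rotate])
      hv hw hu
  obtain ⟨d, hd, hF⟩ :=
    exists_trace_sub_eq_smul_traceDir (A := C) (B := A) (C := B) hz hxy hc (by rwa [add_rotate])
      hw hu hv
  rw [bary_rotate A B C x 0 z, bary_rotate A B C u v w] at hE
  rw [← bary_rotate C A B 0 x y, ← bary_rotate C A B w u v] at hF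
  rw [isGenOH_iff_isGenOHAlong hABC hxyz hP hQP, hQ, hD, hE, hF, isGenOHAlong_smul_iff ha hb hd]

lemma IsAdmissible_s3.symm_apply_vertices (hxyz : IsAdmissible_s3 x y z)
    (hABC : AffineIndependent ℝ ![A, B, C]) (T : Pt ≃ᵃ[ℝ] Pt)
    (hT : IsCevianTriangle ℝ A B C (isotomicConj A B C x y z) (T A) (T B) (T C)) :
    T.symm A = bary A B C (-(z * x + x * y)) (x * y + y * z) (y * z + z * x) ∧
    T.symm B = bary A B C (z * x + x * y) (-(x * y + y * z)) (y * z + z * x) ∧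
    T.symm C = bary A B C (z * x + x * y) (x * y + y * z) (-(y * z + z * x)) := by
  obtain ⟨hx, hy, hz⟩ := hxyz.ne_zero
  obtain ⟨hyz, hzx, hxy⟩ := hxyz.add_ne_zero
  have hu : z * x + x * y ≠ 0 := by
    rw [show z * x + x * y = x * (y + z) by ring]
    exact mul_ne_zero hx hyz
  have hv : x * y + y * z ≠ 0 := by
    rw [show x * y + y * z = y * (z + x) by ring]
    exact mul_ne_zero hy hzx
  have hw : y * z + z * x ≠ 0 := by
    rw [show y * z + z * x = z * (x + y) by ring]
    exact mul_ne_zero hz hxy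
  rw [isotomicConj_eq_bary, isCevianTriangle_bary_iff hABC hu hv hw
    (by rw [← add_rotate]; exact hxyz.isotomic_sum_ne_zero)] at hT
  exact symm_apply_eq_anticevian T (mul_ne_zero hy hz) (mul_ne_zero hz hx) (mul_ne_zero hx hy)
    hu hv hw hT.1 hT.2.1 hT.2.2

end GeneralizedCenters

theorem four_points_same_O_and_H
    (A B C P P' Q Q' D E F D₃ E₃ F₃ : Pt) (x y z : ℝ)
    (hABC : AffineIndependent ℝ ![A, B, C])
    (hsum : x + y + z = 1)
    (hPco : P = x • A + y • B + z • C)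
    (hx0 : x ≠ 0) (hy0 : y ≠ 0) (hz0 : z ≠ 0)
    (hx1 : x ≠ 1) (hy1 : y ≠ 1) (hz1 : z ≠ 1)
    (hst : x * y + y * z + z * x ≠ 0)
    (hP' : P' = (y * z / (x * y + y * z + z * x)) • A
        + (x * z / (x * y + y * z + z * x)) • B
        + (x * y / (x * y + y * z + z * x)) • C)
    (hQ : Q = homoth (cent A B C) (-(1 / 2)) P')
    (hQ' : Q' = homoth (cent A B C) (-(1 / 2)) P)
    (hD : Collinear ℝ {A, P, D} ∧ Collinear ℝ {B, C, D})
    (hE : Collinear ℝ {B, P, E} ∧ Collinear ℝ {A, C, E})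
    (hF : Collinear ℝ {C, P, F} ∧ Collinear ℝ {A, B, F})
    (hD₃ : Collinear ℝ {A, P', D₃} ∧ Collinear ℝ {B, C, D₃})
    (hE₃ : Collinear ℝ {B, P', E₃} ∧ Collinear ℝ {A, C, E₃})
    (hF₃ : Collinear ℝ {C, P', F₃} ∧ Collinear ℝ {A, B, F₃})
    (TP' : Pt ≃ᵃ[ℝ] Pt) (hTP' : TP' A = D₃ ∧ TP' B = E₃ ∧ TP' C = F₃)
    (O H : Pt)
    (hO : Par (midpoint ℝ B C - O) (D - Q) ∧ Par (midpoint ℝ C A - O) (E - Q) ∧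
          Par (midpoint ℝ A B - O) (F - Q))
    (hH : Par (H - A) (D - Q) ∧ Par (H - B) (E - Q) ∧ Par (H - C) (F - Q))
    (Qa Qb Qc Pa Pb Pc : Pt)
    (hQa : Qa = TP'.symm A) (hQb : Qb = TP'.symm B) (hQc : Qc = TP'.symm C)
    (xa ya za xb yb zb xc yc zc : ℝ)
    (hsa : xa + ya + za = 1) (hPaco : Pa = xa • A + ya • B + za • C)
    (ha0 : xa ≠ 0 ∧ ya ≠ 0 ∧ za ≠ 0) (ha1 : xa ≠ 1 ∧ ya ≠ 1 ∧ za ≠ 1)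
    (hsta : xa * ya + ya * za + za * xa ≠ 0)
    (hPa' : homoth (cent A B C) (-2) Qa
        = (ya * za / (xa * ya + ya * za + za * xa)) • A
        + (xa * za / (xa * ya + ya * za + za * xa)) • B
        + (xa * ya / (xa * ya + ya * za + za * xa)) • C)
    (hsb : xb + yb + zb = 1) (hPbco : Pb = xb • A + yb • B + zb • C)
    (hb0 : xb ≠ 0 ∧ yb ≠ 0 ∧ zb ≠ 0) (hb1 : xb ≠ 1 ∧ yb ≠ 1 ∧ zb ≠ 1)
    (hstb : xb * yb + yb * zb + zb * xb ≠ 0)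
    (hPb' : homoth (cent A B C) (-2) Qb
        = (yb * zb / (xb * yb + yb * zb + zb * xb)) • A
        + (xb * zb / (xb * yb + yb * zb + zb * xb)) • B
        + (xb * yb / (xb * yb + yb * zb + zb * xb)) • C)
    (hsc : xc + yc + zc = 1) (hPcco : Pc = xc • A + yc • B + zc • C)
    (hc0 : xc ≠ 0 ∧ yc ≠ 0 ∧ zc ≠ 0) (hc1 : xc ≠ 1 ∧ yc ≠ 1 ∧ zc ≠ 1)
    (hstc : xc * yc + yc * zc + zc * xc ≠ 0)
    (hPc' : homoth (cent A B C) (-2) Qc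
        = (yc * zc / (xc * yc + yc * zc + zc * xc)) • A
        + (xc * zc / (xc * yc + yc * zc + zc * xc)) • B
        + (xc * yc / (xc * yc + yc * zc + zc * xc)) • C) :
    IsGenOH A B C Pa O H ∧ IsGenOH A B C Pb O H ∧ IsGenOH A B C Pc O H := by
  have hxyz : IsAdmissible_s3 x y z := ⟨hsum, ⟨hx0, hy0, hz0⟩, ⟨hx1, hy1, hz1⟩, hst⟩
  obtain rfl : P' = isotomicConj A B C x y z := hP'
  obtain ⟨rfl, rfl, rfl⟩ := hTP'
  obtain ⟨hA, hB, hC⟩ := hxyz.symm_apply_vertices hABC TP' ⟨hD₃, hE₃, hF₃⟩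
  have hPOH : IsGenOH A B C P O H :=
    ⟨x, y, z, _, Q, D, E, F, hsum, hPco, hx0, hy0, hz0, hx1, hy1, hz1, hst, rfl, hQ, hD.1, hD.2,
      hE.1, hE.2, hF.1, hF.2, hO.1, hO.2.1, hO.2.2, hH⟩
  have hQP : homoth (cent A B C) (-2) Q = isotomicConj A B C x y z :=
    (homoth_eq_iff_of_mul_eq_one (by norm_num)).1 hQ.symm
  rw [isGenOH_iff_traceDir hABC hxyz hPco hQP (hQ.trans (complement_isotomicConj hst))
    (fun h ↦ hst (by linear_combination h / 2))] at hPOH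
  refine ⟨(isGenOH_iff_traceDir hABC ⟨hsa, ha0, ha1, hsta⟩ hPaco hPa' (hQa.trans hA) ?_).2 ?_,
    (isGenOH_iff_traceDir hABC ⟨hsb, hb0, hb1, hstb⟩ hPbco hPb' (hQb.trans hB) ?_).2 ?_,
    (isGenOH_iff_traceDir hABC ⟨hsc, hc0, hc1, hstc⟩ hPcco hPc' (hQc.trans hC) ?_).2 ?_⟩
  · exact fun h ↦ mul_ne_zero hy0 hz0 (by linear_combination h / 2)
  · simpa only [neg_sq] using hPOH
  · exact fun h ↦ mul_ne_zero hz0 hx0 (by linear_combination h / 2)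
  · simpa only [neg_sq] using hPOH
  · exact fun h ↦ mul_ne_zero hx0 hy0 (by linear_combination h / 2)
  · simpa only [neg_sq] using hPOH
end
end
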